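/- (Action of the quantum determinant in the dynamical representation.) For every integer k ≥ 0 and all λ, ω ∈ ℂ and nonzero complex z for which all theta factors appearing in denominators are nonzero, (F(λ)/F(λ−ω+2k)) · [ D_k(λ, z)·A_k(λ+1, q²z) − B_{k−1}(λ, z)·C_k(λ+1, q²z) ] = q^{ω}·θ(z q^{1−ω})/θ(z q^{1+ω}), where for k = 0 the term B_{k−1}(λ,z)C_k(λ+1,q²z) is interpreted as 0 (since C_0 = 0). In particular the quantum determinant acts in the dynamical representation π^ω by the scalar q^{ω}θ(z q^{1−ω})/θ(z q^{1+ω}), which equals 1 when ω = 0. -/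

import Mathlib

noncomputable section

open Finset

/-- The normalized Jacobi theta function `θ(z) = ∏_{j≥0} (1 - z p^j)(1 - p^{j+1}/z)`. -/
def theta (p : ℝ) (z : ℂ) : ℂ :=
  ∏' j : ℕ, ((1 - z * (p : ℂ) ^ j) * (1 - (p : ℂ) ^ (j + 1) / z))

/-- Complex power `q ^ l := exp (l · log q)` for a real base `q`. -/
def qp (q : ℝ) (l : ℂ) : ℂ := Complex.exp (l * (Real.log q : ℂ))

/-- Elliptic Pochhammer symbol `(a)_n = ∏_{i=0}^{n-1} θ(a q^{2i})` in base `q², p`. -/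
def epoch (p q : ℝ) (a : ℂ) (n : ℕ) : ℂ :=
  ∏ i ∈ Finset.range n, theta p (a * qp q (2 * (i : ℂ)))

/-- Elliptic binomial coefficient `[k over l] = ∏_{i=1}^{l} θ(q^{2(k-l+i)})/θ(q^{2i})`. -/
def ellbin (p q : ℝ) (k l : ℕ) : ℂ :=
  ∏ i ∈ Finset.range l,
    theta p (qp q (2 * ((k : ℂ) - (l : ℂ) + (i : ℂ) + 1))) / theta p (qp q (2 * ((i : ℂ) + 1)))

/-- Entry `a(λ,z)` of the Andrews–Baxter–Forrester `R`-matrix. -/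
def Ra (p q : ℝ) (lam z : ℂ) : ℂ :=
  theta p z * theta p (qp q (2 * (lam + 2))) /
    (theta p (qp q 2 * z) * theta p (qp q (2 * (lam + 1))))

/-- Entry `b(λ,z)` of the Andrews–Baxter–Forrester `R`-matrix. -/
def Rb (p q : ℝ) (lam z : ℂ) : ℂ :=
  theta p (qp q 2) * theta p (qp q (-2 * (lam + 1)) * z) /
    (theta p (qp q 2 * z) * theta p (qp q (-2 * (lam + 1))))

/-- Entry `c(λ,z)` of the Andrews–Baxter–Forrester `R`-matrix. -/
def Rc (p q : ℝ) (lam z : ℂ) : ℂ :=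
  theta p (qp q 2) * theta p (qp q (2 * (lam + 1)) * z) /
    (theta p (qp q 2 * z) * theta p (qp q (2 * (lam + 1))))

/-- Entry `d(λ,z)` of the Andrews–Baxter–Forrester `R`-matrix. -/
def Rd (p q : ℝ) (lam z : ℂ) : ℂ :=
  theta p z * theta p (qp q (-2 * lam)) /
    (theta p (qp q 2 * z) * theta p (qp q (-2 * (lam + 1))))

/-- Coefficient `A_k(λ,z)` of the Felder–Varchenko dynamical representation `π^ω`. -/
def Ak (p q : ℝ) (om : ℂ) (k : ℕ) (lam z : ℂ) : ℂ :=
  qp q (2 * (k : ℂ)) * theta p (qp q (-2 * (lam + 1) - 2 * (k : ℂ))) *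
      theta p (z * qp q (om - 2 * (k : ℂ) + 1)) /
    (theta p (qp q (-2 * (lam + 1))) * theta p (z * qp q (om + 1)))

/-- Coefficient `B_k(λ,z)` of the Felder–Varchenko dynamical representation `π^ω`. -/
def Bk (p q : ℝ) (om : ℂ) (k : ℕ) (lam z : ℂ) : ℂ :=
  qp q (k : ℂ) * theta p (qp q 2) *
      theta p (z * qp q (-2 * (lam + 1) + om - 2 * (k : ℂ) - 1)) /
    (theta p (qp q (-2 * (lam + 1))) * theta p (z * qp q (om + 1)))

/-- Coefficient `C_k(λ,z)` of the Felder–Varchenko dynamical representation `π^ω`;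
`C_0 = 0`. -/
def Ck (p q : ℝ) (om : ℂ) (k : ℕ) (lam z : ℂ) : ℂ :=
  if k = 0 then 0
  else
    qp q (-((k : ℂ) - 1)) * theta p (qp q (2 * (k : ℂ))) *
        theta p (qp q (2 * (om - (k : ℂ) + 1))) *
        theta p (z * qp q (2 * (lam + 1) - om + 2 * (k : ℂ) - 1)) /
      (theta p (qp q 2) * theta p (qp q (2 * (lam + 1))) * theta p (z * qp q (om + 1)))

/-- Coefficient `D_k(λ,z)` of the Felder–Varchenko dynamical representation `π^ω`. -/
def Dk (p q : ℝ) (om : ℂ) (k : ℕ) (lam z : ℂ) : ℂ :=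
  theta p (qp q (-2 * (lam + 1 - om + (k : ℂ)))) * theta p (z * qp q (-om + 2 * (k : ℂ) + 1)) /
    (theta p (qp q (-2 * (lam + 1))) * theta p (z * qp q (om + 1)))

/-- `F(μ) = q^μ θ(q^{-2(μ+1)})`. -/
def Fdet (p q : ℝ) (mu : ℂ) : ℂ := qp q mu * theta p (qp q (-2 * (mu + 1)))

/-- The coefficient `C_{kl}(μ)` from the corepresentation matrix elements. -/
def Ckl (p q : ℝ) (k l : ℕ) (mu : ℂ) : ℂ :=
  ellbin p q k l * epoch p q (qp q (2 * (mu - (l : ℂ) + 2))) l /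
    epoch p q (qp q (2 * (mu + (k : ℂ) - 2 * (l : ℂ) + 2))) l

/-- The terminating balanced very-well-poised elliptic hypergeometric series
`₁₀ω₉(a₁; a₄,…,a₁₀)`, truncated at `n`. -/
def tenW9 (p q : ℝ) (n : ℕ) (a1 a4 a5 a6 a7 a8 a9 a10 : ℂ) : ℂ :=
  ∑ k ∈ Finset.range (n + 1),
    theta p (a1 * qp q (4 * (k : ℂ))) / theta p a1 *
      (epoch p q a1 k * epoch p q a4 k * epoch p q a5 k * epoch p q a6 k * epoch p q a7 k *
        epoch p q a8 k * epoch p q a9 k * epoch p q a10 k * qp q (2 * (k : ℂ))) /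
      (epoch p q (qp q 2) k * epoch p q (a1 * qp q 2 / a4) k * epoch p q (a1 * qp q 2 / a5) k *
        epoch p q (a1 * qp q 2 / a6) k * epoch p q (a1 * qp q 2 / a7) k *
        epoch p q (a1 * qp q 2 / a8) k * epoch p q (a1 * qp q 2 / a9) k *
        epoch p q (a1 * qp q 2 / a10) k)

/-- The product of all theta factors appearing in denominators of the terms of
`tenW9 p q n a1 a4 … a10` (including the `θ(a₁)` from the very-well-poised prefactor). -/
def tenW9Den (p q : ℝ) (n : ℕ) (a1 a4 a5 a6 a7 a8 a9 a10 : ℂ) : ℂ :=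
  theta p a1 * epoch p q (qp q 2) n * epoch p q (a1 * qp q 2 / a4) n *
    epoch p q (a1 * qp q 2 / a5) n * epoch p q (a1 * qp q 2 / a6) n *
    epoch p q (a1 * qp q 2 / a7) n * epoch p q (a1 * qp q 2 / a8) n *
    epoch p q (a1 * qp q 2 / a9) n * epoch p q (a1 * qp q 2 / a10) n

/-!
By the Jacobi triple product, `θ(z)` is a constant times the theta series
`S_p(-z) = ∑_{m ∈ ℤ} p^(m(m-1)/2) (-z)^m`. Splitting the double series `S_p(-xy) S_p(-x/y)`
according to the parity of `m + n` separates `x` from `y` and gives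
`θ(xy) θ(x/y) = f(x) g(y) - (x/y) g(x) f(y)` with `f(x)` and `g(x)` proportional to `S_{p²}(x²)`
and `S_{p²}(p x²)`. Up to the factor `x`, the products `θ(xy) θ(x/y)` are thus `2 × 2` minors, and
Weierstrass' three-term identity is their Plücker relation. Over a common denominator, the
determinant `D_k A_k - B_{k-1} C_k` is the left-hand side of one instance of that identity, whose
right-hand side is a single product.
-/

open Filter Topology

section QPochhammer

variable {K : Type*} [Field K]

/-- The `q`-shifted factorial `(a; p)_n = ∏_{j<n} (1 - a p^j)`. -/
def qPochhammer (a p : K) (n : ℕ) : K := ∏ j ∈ range n, (1 - a * p ^ j)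

lemma qPochhammer_succ (a p : K) (n : ℕ) :
    qPochhammer a p (n + 1) = qPochhammer a p n * (1 - a * p ^ n) :=
  prod_range_succ _ n

lemma one_sub_mul_pow_ne_zero {p : K} (hp : ¬IsOfFinOrder p) (n : ℕ) : 1 - p * p ^ n ≠ 0 := by
  rw [← pow_succ', sub_ne_zero]
  exact fun h => hp (isOfFinOrder_iff_pow_eq_one.mpr ⟨n + 1, n.succ_pos, h.symm⟩)

lemma qPochhammer_self_ne_zero {p : K} (hp : ¬IsOfFinOrder p) (n : ℕ) :
    qPochhammer p p n ≠ 0 :=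
  prod_ne_zero_iff.mpr fun j _ => one_sub_mul_pow_ne_zero hp j

/-- The reciprocal `1 / (p; p)_i`, extended by zero to negative `i` so that its recurrence
`qPochhammerInv_eq_mul_succ` holds on all of `ℤ`. -/
def qPochhammerInv (p : K) (i : ℤ) : K := if i < 0 then 0 else (qPochhammer p p i.toNat)⁻¹

lemma qPochhammerInv_natCast (p : K) (n : ℕ) : qPochhammerInv p n = (qPochhammer p p n)⁻¹ := by
  simp [qPochhammerInv]

lemma qPochhammerInv_of_neg (p : K) {i : ℤ} (hi : i < 0) : qPochhammerInv p i = 0 := if_pos hi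

lemma qPochhammerInv_eq_mul_succ {p : K} (hp : ¬IsOfFinOrder p) (i : ℤ) :
    qPochhammerInv p i = (1 - p ^ (i + 1)) * qPochhammerInv p (i + 1) := by
  rcases lt_trichotomy (i + 1) 0 with hi | hi | hi
  · rw [qPochhammerInv_of_neg p (by lia), qPochhammerInv_of_neg p hi, mul_zero]
  · rw [qPochhammerInv_of_neg p (by lia), hi, zpow_zero, sub_self, zero_mul]
  · lift i to ℕ using by lia
    rw [← Nat.cast_succ, qPochhammerInv_natCast, qPochhammerInv_natCast, qPochhammer_succ,
      zpow_natCast, pow_succ']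
    field [qPochhammer_self_ne_zero hp i, one_sub_mul_pow_ne_zero hp i]

/-- The Gaussian binomial coefficient `[i + j choose i]_p` in its symmetric parametrisation.
It vanishes when `i` or `j` is negative. -/
def gaussBinom (p : K) (i j : ℤ) : K :=
  qPochhammer p p (i + j).toNat * qPochhammerInv p i * qPochhammerInv p j

lemma gaussBinom_comm (p : K) (i j : ℤ) : gaussBinom p i j = gaussBinom p j i := by
  rw [gaussBinom, gaussBinom, add_comm i j, mul_right_comm]

lemma gaussBinom_succ_right {p : K} (hp₀ : p ≠ 0) (hp : ¬IsOfFinOrder p) {i j : ℤ}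
    (hij : 0 ≤ i + j) :
    gaussBinom p i (j + 1) = gaussBinom p i j + p ^ (j + 1) * gaussBinom p (i - 1) (j + 1) := by
  have hQ : qPochhammer p p (i + (j + 1)).toNat =
      qPochhammer p p (i + j).toNat * (1 - p ^ (j + 1) * p ^ i) := by
    obtain ⟨n, hn⟩ := Int.eq_ofNat_of_zero_le hij
    have hn' : i + (j + 1) = (n + 1 : ℕ) := by push_cast; lia
    rw [← zpow_add₀ hp₀, show j + 1 + i = (n + 1 : ℕ) by lia, hn, hn', Int.toNat_natCast,
      Int.toNat_natCast, qPochhammer_succ, zpow_natCast, pow_succ']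
  have hi : qPochhammerInv p (i - 1) = (1 - p ^ i) * qPochhammerInv p i := by
    simpa only [sub_add_cancel] using qPochhammerInv_eq_mul_succ hp (i - 1)
  rw [gaussBinom, gaussBinom, gaussBinom, sub_add_add_cancel, hQ, hi,
    qPochhammerInv_eq_mul_succ hp j]
  ring

lemma gaussBinom_succ_left {p : K} (hp₀ : p ≠ 0) (hp : ¬IsOfFinOrder p) {i j : ℤ}
    (hij : 0 ≤ i + j) :
    gaussBinom p (i + 1) j = gaussBinom p i j + p ^ (i + 1) * gaussBinom p (i + 1) (j - 1) := by
  rw [gaussBinom_comm, gaussBinom_succ_right hp₀ hp (by lia), gaussBinom_comm p j,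
    gaussBinom_comm p (j - 1)]

lemma gaussBinom_self_neg {p : K} {m : ℤ} (hm : m ≠ 0) : gaussBinom p m (-m) = 0 := by
  rcases hm.lt_or_gt with hm | hm
  · rw [gaussBinom, qPochhammerInv_of_neg p hm, mul_zero, zero_mul]
  · rw [gaussBinom, qPochhammerInv_of_neg p (neg_lt_zero.mpr hm), mul_zero]

lemma gaussBinom_zero_zero (p : K) : gaussBinom p 0 0 = 1 := by
  simp [gaussBinom, qPochhammerInv, qPochhammer]

end QPochhammer

section Triangular

/-- The triangular number `m (m - 1) / 2` of an integer `m`, possibly negative. -/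
def triangular (m : ℤ) : ℤ := m * (m - 1) / 2

lemma two_mul_triangular (m : ℤ) : 2 * triangular m = m * (m - 1) :=
  Int.mul_ediv_cancel' m.even_mul_pred_self.two_dvd

lemma triangular_zero : triangular 0 = 0 := rfl

lemma triangular_succ (m : ℤ) : triangular (m + 1) = triangular m + m := by
  linarith [two_mul_triangular m, two_mul_triangular (m + 1)]

lemma triangular_neg (m : ℤ) : triangular (-m) = triangular m + m := by
  linarith [two_mul_triangular m, two_mul_triangular (-m)]

lemma triangular_add_add_triangular_sub (a b : ℤ) :
    triangular (a + b) + triangular (a - b) = 2 * triangular a + (2 * triangular b + b) := by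
  linarith [two_mul_triangular a, two_mul_triangular b, two_mul_triangular (a + b),
    two_mul_triangular (a - b)]

lemma triangular_add_add_triangular_sub_add_one (a b : ℤ) :
    triangular (a + b) + triangular (a - b + 1) = (2 * triangular a + a) + 2 * triangular b := by
  linarith [triangular_add_add_triangular_sub a b, triangular_succ (a - b)]

end Triangular

section ThetaTerm

variable {K : Type*} [Field K]

/-- The `m`-th term `p^(m(m-1)/2) z^m` of the Jacobi theta series. -/
def thetaTerm (p z : K) (m : ℤ) : K := p ^ triangular m * z ^ m

lemma thetaTerm_zero (p z : K) : thetaTerm p z 0 = 1 := by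
  rw [thetaTerm, triangular_zero, zpow_zero, zpow_zero, mul_one]

lemma thetaTerm_succ {p z : K} (hp : p ≠ 0) (hz : z ≠ 0) (m : ℤ) :
    thetaTerm p z (m + 1) = p ^ m * z * thetaTerm p z m := by
  rw [thetaTerm, thetaTerm, triangular_succ, zpow_add₀ hp, zpow_add_one₀ hz]
  ring

lemma thetaTerm_neg {p : K} (hp : p ≠ 0) (z : K) (m : ℤ) :
    thetaTerm p z (-m) = thetaTerm p (p / z) m := by
  rw [thetaTerm, thetaTerm, triangular_neg, zpow_add₀ hp, div_zpow, zpow_neg]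
  ring

lemma thetaTerm_ne_zero {p z : K} (hp : p ≠ 0) (hz : z ≠ 0) (m : ℤ) : thetaTerm p z m ≠ 0 :=
  mul_ne_zero (zpow_ne_zero _ hp) (zpow_ne_zero _ hz)

lemma thetaTerm_mul_of_add_even {p u v : K} (hp : p ≠ 0) (hu : u ≠ 0) (hv : v ≠ 0) (a b : ℤ) :
    thetaTerm p u (a + b) * thetaTerm p v (a - b) =
      thetaTerm (p ^ 2) (u * v) a * thetaTerm (p ^ 2) (p * (u / v)) b := by
  have hpow : p ^ triangular (a + b) * p ^ triangular (a - b) =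
      (p ^ 2) ^ triangular a * ((p ^ 2) ^ triangular b * p ^ b) := by
    rw [← zpow_natCast p 2, ← zpow_mul, ← zpow_mul, ← zpow_add₀ hp, ← zpow_add₀ hp,
      ← zpow_add₀ hp, triangular_add_add_triangular_sub, Nat.cast_ofNat]
  simp only [thetaTerm, mul_zpow, div_zpow, zpow_add₀ hu, zpow_sub₀ hv]
  linear_combination u ^ a * u ^ b * (v ^ a / v ^ b) * hpow

lemma thetaTerm_mul_of_add_odd {p u v : K} (hp : p ≠ 0) (hu : u ≠ 0) (hv : v ≠ 0) (a b : ℤ) :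
    thetaTerm p u (a + b) * thetaTerm p v (a - b + 1) =
      v * (thetaTerm (p ^ 2) (p * (u * v)) a * thetaTerm (p ^ 2) (u / v) b) := by
  have hpow : p ^ triangular (a + b) * p ^ triangular (a - b + 1) =
      (p ^ 2) ^ triangular a * p ^ a * (p ^ 2) ^ triangular b := by
    rw [← zpow_natCast p 2, ← zpow_mul, ← zpow_mul, ← zpow_add₀ hp, ← zpow_add₀ hp,
      ← zpow_add₀ hp, triangular_add_add_triangular_sub_add_one, Nat.cast_ofNat]
  simp only [thetaTerm, mul_zpow, div_zpow, zpow_add₀ hu, zpow_sub₀ hv, zpow_add_one₀ hv]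
  linear_combination u ^ a * u ^ b * (v ^ a / v ^ b) * v * hpow

end ThetaTerm

section FiniteTripleProduct

variable {K : Type*} [Field K]

/-- The coefficient of `z^m` in the finite triple product
`∏_{j<a} (1 + z p^j) ∏_{j<b} (1 + p^{j+1} / z)`, multiplied by `z^m`. The numbers `a` and `b` of
factors are kept independent so that adjoining one factor amounts to one Pascal rule. -/
def tripleProductTerm (p z : K) (a b : ℕ) (m : ℤ) : K :=
  gaussBinom p (b + m) (a - m) * thetaTerm p z m

lemma tripleProductTerm_zero_zero_of_ne_zero (p z : K) {m : ℤ} (hm : m ≠ 0) :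
    tripleProductTerm p z 0 0 m = 0 := by
  simp [tripleProductTerm, gaussBinom_self_neg hm]

lemma tripleProductTerm_zero_zero_zero (p z : K) : tripleProductTerm p z 0 0 0 = 1 := by
  simp [tripleProductTerm, gaussBinom_zero_zero, thetaTerm_zero]

lemma tripleProductTerm_succ_left {p z : K} (hp₀ : p ≠ 0) (hp : ¬IsOfFinOrder p) (hz : z ≠ 0)
    (a b : ℕ) (m : ℤ) :
    tripleProductTerm p z (a + 1) b m =
      tripleProductTerm p z a b m + p ^ a * z * tripleProductTerm p z a b (m - 1) := by
  have hpascal := gaussBinom_succ_right hp₀ hp (i := b + m) (j := a - m) (by lia)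
  have hterm : p ^ ((a : ℤ) - m + 1) * thetaTerm p z m = p ^ a * z * thetaTerm p z (m - 1) := by
    have hsucc := thetaTerm_succ hp₀ hz (m - 1)
    rw [sub_add_cancel] at hsucc
    rw [hsucc, show (a : ℤ) - m + 1 = a - (m - 1) by ring, zpow_sub₀ hp₀, zpow_natCast]
    field [zpow_ne_zero (m - 1) hp₀]
  simp only [tripleProductTerm]
  rw [show ((a + 1 : ℕ) : ℤ) - m = a - m + 1 by push_cast; ring, hpascal,
    show (a : ℤ) - (m - 1) = a - m + 1 by ring, ← add_sub_assoc]
  linear_combination gaussBinom p (b + m - 1) (a - m + 1) * hterm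

lemma tripleProductTerm_succ_right {p z : K} (hp₀ : p ≠ 0) (hp : ¬IsOfFinOrder p) (hz : z ≠ 0)
    (a b : ℕ) (m : ℤ) :
    tripleProductTerm p z a (b + 1) m =
      tripleProductTerm p z a b m + p ^ (b + 1) / z * tripleProductTerm p z a b (m + 1) := by
  have hpascal := gaussBinom_succ_left hp₀ hp (i := b + m) (j := a - m) (by lia)
  have hterm : p ^ ((b : ℤ) + m + 1) * thetaTerm p z m =
      p ^ (b + 1) / z * thetaTerm p z (m + 1) := by
    rw [thetaTerm_succ hp₀ hz, show (b : ℤ) + m + 1 = (b + 1 : ℕ) + m by push_cast; ring,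
      zpow_add₀ hp₀, zpow_natCast]
    field
  simp only [tripleProductTerm]
  rw [show ((b + 1 : ℕ) : ℤ) + m = b + m + 1 by push_cast; ring, hpascal,
    show (a : ℤ) - (m + 1) = a - m - 1 by ring, ← add_assoc]
  linear_combination gaussBinom p (b + m + 1) (a - m - 1) * hterm

lemma hasSum_tripleProductTerm [TopologicalSpace K] [IsTopologicalRing K] {p z : K}
    (hp₀ : p ≠ 0) (hp : ¬IsOfFinOrder p) (hz : z ≠ 0) (a b : ℕ) :
    HasSum (tripleProductTerm p z a b)
      (qPochhammer (-z) p a * qPochhammer (-(p / z)) p b) := by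
  induction b with
  | zero =>
    induction a with
    | zero =>
      convert hasSum_single 0 fun m hm => tripleProductTerm_zero_zero_of_ne_zero p z hm using 1
      rw [tripleProductTerm_zero_zero_zero]
      simp [qPochhammer]
    | succ a ih =>
      have hshift := (Equiv.subRight (1 : ℤ)).hasSum_iff.mpr ih
      convert ih.add (hshift.mul_left (p ^ a * z)) using 1
      · exact funext (tripleProductTerm_succ_left hp₀ hp hz a 0)
      · rw [qPochhammer_succ]
        ring
  | succ b ih =>
    have hshift := (Equiv.addRight (1 : ℤ)).hasSum_iff.mpr ih
    convert ih.add (hshift.mul_left (p ^ (b + 1) / z)) using 1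
    · exact funext (tripleProductTerm_succ_right hp₀ hp hz a b)
    · rw [qPochhammer_succ]
      ring

end FiniteTripleProduct

section InfiniteTripleProduct

variable {𝕜 : Type*} [NormedField 𝕜]

lemma not_isOfFinOrder_of_norm_lt_one {p : 𝕜} (hp : ‖p‖ < 1) : ¬IsOfFinOrder p :=
  fun h => hp.ne h.norm_eq_one

/-- The infinite `q`-shifted factorial `(a; p)_∞ = ∏_{j≥0} (1 - a p^j)`. -/
def qPochhammerInf (a p : 𝕜) : 𝕜 := ∏' j : ℕ, (1 - a * p ^ j)

lemma summable_norm_mul_pow (a : 𝕜) {p : 𝕜} (hp : ‖p‖ < 1) :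
    Summable fun j : ℕ => ‖a * p ^ j‖ := by
  simpa only [norm_mul, norm_pow] using
    (summable_geometric_of_lt_one (norm_nonneg p) hp).mul_left ‖a‖

lemma summable_norm_thetaTerm_natCast {p z : 𝕜} (hp₀ : p ≠ 0) (hp : ‖p‖ < 1) (hz : z ≠ 0) :
    Summable fun n : ℕ => ‖thetaTerm p z n‖ := by
  have hne (n : ℕ) : ‖thetaTerm p z n‖ ≠ 0 := norm_ne_zero_iff.mpr (thetaTerm_ne_zero hp₀ hz n)
  refine summable_of_ratio_test_tendsto_lt_one zero_lt_one (Eventually.of_forall hne) ?_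
  have hratio (n : ℕ) :
      ‖thetaTerm p z (n + 1 : ℕ)‖ / ‖thetaTerm p z n‖ = ‖p‖ ^ n * ‖z‖ := by
    rw [Nat.cast_succ, thetaTerm_succ hp₀ hz, norm_mul, mul_div_cancel_right₀ _ (hne n), norm_mul,
      zpow_natCast, norm_pow]
  simpa only [norm_norm, hratio, zero_mul] using
    (tendsto_pow_atTop_nhds_zero_of_lt_one (norm_nonneg p) hp).mul_const ‖z‖

lemma summable_norm_thetaTerm {p z : 𝕜} (hp₀ : p ≠ 0) (hp : ‖p‖ < 1) (hz : z ≠ 0) :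
    Summable fun m => ‖thetaTerm p z m‖ := by
  refine .of_nat_of_neg (summable_norm_thetaTerm_natCast hp₀ hp hz) ?_
  simpa only [thetaTerm_neg hp₀] using
    summable_norm_thetaTerm_natCast hp₀ hp (div_ne_zero hp₀ hz)

variable [CompleteSpace 𝕜]

lemma multipliable_one_sub_mul_pow (a : 𝕜) {p : 𝕜} (hp : ‖p‖ < 1) :
    Multipliable fun j : ℕ => 1 - a * p ^ j := by
  simpa only [neg_mul, ← sub_eq_add_neg] using
    multipliable_one_add_of_summable (summable_norm_mul_pow (-a) hp)

lemma tendsto_qPochhammer (a : 𝕜) {p : 𝕜} (hp : ‖p‖ < 1) :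
    Tendsto (qPochhammer a p) atTop (𝓝 (qPochhammerInf a p)) :=
  (multipliable_one_sub_mul_pow a hp).tendsto_prod_tprod_nat

lemma qPochhammerInf_eq_one_sub_mul (a : 𝕜) {p : 𝕜} (hp : ‖p‖ < 1) :
    qPochhammerInf a p = (1 - a) * qPochhammerInf (a * p) p := by
  have hmul := multipliable_one_sub_mul_pow (a * p) hp
  have hsplit := tprod_eq_zero_mul' (f := fun j : ℕ => 1 - a * p ^ j)
    (by simpa only [pow_succ', mul_assoc] using hmul)
  simpa only [qPochhammerInf, pow_zero, mul_one, pow_succ', mul_assoc] using hsplit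

lemma qPochhammerInf_self_ne_zero {p : 𝕜} (hp : ‖p‖ < 1) : qPochhammerInf p p ≠ 0 := by
  have hne := tprod_one_add_ne_zero_of_summable (f := fun j : ℕ => -p * p ^ j)
    (fun j => by
      simpa only [neg_mul, ← sub_eq_add_neg] using
        one_sub_mul_pow_ne_zero (not_isOfFinOrder_of_norm_lt_one hp) j)
    (summable_norm_mul_pow (-p) hp)
  simpa only [qPochhammerInf, neg_mul, ← sub_eq_add_neg] using hne

lemma tendsto_qPochhammerInv {p : 𝕜} (hp : ‖p‖ < 1) :
    Tendsto (qPochhammerInv p) atTop (𝓝 (qPochhammerInf p p)⁻¹) := by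
  rw [← Nat.map_cast_int_atTop, tendsto_map'_iff]
  exact ((tendsto_qPochhammer p hp).inv₀ (qPochhammerInf_self_ne_zero hp)).congr
    fun n => (qPochhammerInv_natCast p n).symm

lemma exists_norm_qPochhammerInv_le {p : 𝕜} (hp : ‖p‖ < 1) :
    ∃ M, ∀ i, ‖qPochhammerInv p i‖ ≤ M := by
  obtain ⟨M, hM⟩ :=
    ((tendsto_qPochhammerInv hp).comp tendsto_natCast_atTop_atTop).norm.bddAbove_range
  rw [mem_upperBounds, Set.forall_mem_range] at hM
  refine ⟨M, fun i => ?_⟩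
  rcases lt_or_ge i 0 with hi | hi
  · rw [qPochhammerInv_of_neg p hi, norm_zero]
    exact (norm_nonneg _).trans (hM 0)
  · lift i to ℕ using hi
    exact hM i

lemma exists_norm_gaussBinom_le {p : 𝕜} (hp : ‖p‖ < 1) :
    ∃ M, ∀ i j, ‖gaussBinom p i j‖ ≤ M := by
  obtain ⟨N, hN⟩ := (tendsto_qPochhammer p hp).norm.bddAbove_range
  rw [mem_upperBounds, Set.forall_mem_range] at hN
  obtain ⟨M, hM⟩ := exists_norm_qPochhammerInv_le hp
  have hN₀ : 0 ≤ N := (norm_nonneg _).trans (hN 0)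
  have hM₀ : 0 ≤ M := (norm_nonneg _).trans (hM 0)
  refine ⟨N * M * M, fun i j => ?_⟩
  rw [gaussBinom, norm_mul, norm_mul]
  gcongr
  exacts [hN _, hM i, hM j]

lemma tendsto_gaussBinom_add_sub {p : 𝕜} (hp : ‖p‖ < 1) (m : ℤ) :
    Tendsto (fun n : ℕ => gaussBinom p (n + m) (n - m)) atTop (𝓝 (qPochhammerInf p p)⁻¹) := by
  have hcast : Tendsto (fun n : ℕ => (n : ℤ)) atTop atTop := tendsto_natCast_atTop_atTop
  have hinv := tendsto_qPochhammerInv hp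
  have hnum : Tendsto (fun n : ℕ => qPochhammer p p ((n + m) + (n - m) : ℤ).toNat) atTop
      (𝓝 (qPochhammerInf p p)) := by
    refine (tendsto_qPochhammer p hp).comp (tendsto_atTop_mono (fun n => ?_) tendsto_id)
    simp only [id_eq]
    lia
  have hplus := hinv.comp (tendsto_atTop_add_const_right atTop m hcast)
  have hminus := hinv.comp (tendsto_atTop_add_const_right atTop (-m) hcast)
  have hlim := (hnum.mul hplus).mul hminus
  rwa [mul_inv_cancel₀ (qPochhammerInf_self_ne_zero hp), one_mul] at hlim

/-- The Jacobi theta series `∑_{m ∈ ℤ} p^(m(m-1)/2) z^m`. -/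
def thetaSeries (p z : 𝕜) : 𝕜 := ∑' m : ℤ, thetaTerm p z m

lemma hasSum_thetaTerm {p z : 𝕜} (hp₀ : p ≠ 0) (hp : ‖p‖ < 1) (hz : z ≠ 0) :
    HasSum (thetaTerm p z) (thetaSeries p z) :=
  (summable_norm_thetaTerm hp₀ hp hz).of_norm.hasSum

theorem jacobi_triple_product {p z : 𝕜} (hp₀ : p ≠ 0) (hp : ‖p‖ < 1) (hz : z ≠ 0) :
    qPochhammerInf p p * (qPochhammerInf (-z) p * qPochhammerInf (-(p / z)) p) =
      thetaSeries p z := by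
  obtain ⟨M, hM⟩ := exists_norm_gaussBinom_le hp
  have hseries : Tendsto (fun n : ℕ => ∑' m, tripleProductTerm p z n n m) atTop
      (𝓝 (∑' m, (qPochhammerInf p p)⁻¹ * thetaTerm p z m)) := by
    refine tendsto_tsum_of_dominated_convergence
      ((summable_norm_thetaTerm hp₀ hp hz).mul_left M)
      (fun m => (tendsto_gaussBinom_add_sub hp m).mul_const _)
      (Eventually.of_forall fun n m => ?_)
    rw [tripleProductTerm, norm_mul]
    gcongr
    exact hM _ _
  have hprod := (tendsto_qPochhammer (-z) hp).mul (tendsto_qPochhammer (-(p / z)) hp)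
  have heq (n : ℕ) : ∑' m, tripleProductTerm p z n n m =
      qPochhammer (-z) p n * qPochhammer (-(p / z)) p n :=
    (hasSum_tripleProductTerm hp₀ (not_isOfFinOrder_of_norm_lt_one hp) hz n n).tsum_eq
  rw [funext heq, tsum_mul_left] at hseries
  rw [tendsto_nhds_unique hprod hseries, mul_inv_cancel_left₀ (qPochhammerInf_self_ne_zero hp),
    thetaSeries]

end InfiniteTripleProduct

section ThetaAddition

lemma hasSum_int_prod_of_add_even_of_add_odd {M : Type*} [AddCommMonoid M] [TopologicalSpace M]
    [ContinuousAdd M] {f : ℤ × ℤ → M} {s t : M}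
    (heven : HasSum (fun ab : ℤ × ℤ => f (ab.1 + ab.2, ab.1 - ab.2)) s)
    (hodd : HasSum (fun ab : ℤ × ℤ => f (ab.1 + ab.2, ab.1 - ab.2 + 1)) t) :
    HasSum f (s + t) := by
  have hinjEven : Function.Injective fun ab : ℤ × ℤ => (ab.1 + ab.2, ab.1 - ab.2) := by
    rintro ⟨a, b⟩ ⟨c, d⟩ h
    simp only [Prod.mk.injEq] at h ⊢
    lia
  have hinjOdd : Function.Injective fun ab : ℤ × ℤ => (ab.1 + ab.2, ab.1 - ab.2 + 1) := by
    rintro ⟨a, b⟩ ⟨c, d⟩ h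
    simp only [Prod.mk.injEq] at h ⊢
    lia
  refine HasSum.add_isCompl ⟨Set.disjoint_left.mpr ?_, codisjoint_iff.mpr ?_⟩
    (hinjEven.hasSum_range_iff.mpr heven) (hinjOdd.hasSum_range_iff.mpr hodd)
  · rintro _ ⟨⟨a, b⟩, rfl⟩ ⟨⟨c, d⟩, h⟩
    simp only [Prod.mk.injEq] at h
    lia
  · refine Set.eq_univ_of_forall fun ⟨m, n⟩ => ?_
    rcases Int.even_or_odd' (m + n) with ⟨a, h | h⟩
    · exact .inl ⟨(a, m - a), Prod.ext (by dsimp; lia) (by dsimp; lia)⟩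
    · exact .inr ⟨(a, m - a), Prod.ext (by dsimp; lia) (by dsimp; lia)⟩

variable {𝕜 : Type*} [NormedField 𝕜] [CompleteSpace 𝕜]

theorem thetaSeries_mul_thetaSeries {p u v : 𝕜} (hp₀ : p ≠ 0) (hp : ‖p‖ < 1) (hu : u ≠ 0)
    (hv : v ≠ 0) :
    thetaSeries p u * thetaSeries p v =
      thetaSeries (p ^ 2) (u * v) * thetaSeries (p ^ 2) (p * (u / v)) +
        v * (thetaSeries (p ^ 2) (p * (u * v)) * thetaSeries (p ^ 2) (u / v)) := by
  have hp₀' : p ^ 2 ≠ 0 := pow_ne_zero 2 hp₀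
  have hp' : ‖p ^ 2‖ < 1 := by
    rw [norm_pow]
    exact pow_lt_one₀ (norm_nonneg p) hp two_ne_zero
  have hprod {r x y : 𝕜} (hr₀ : r ≠ 0) (hr : ‖r‖ < 1) (hx : x ≠ 0) (hy : y ≠ 0) :
      HasSum (fun mn : ℤ × ℤ => thetaTerm r x mn.1 * thetaTerm r y mn.2)
        (thetaSeries r x * thetaSeries r y) :=
    (hasSum_thetaTerm hr₀ hr hx).mul (hasSum_thetaTerm hr₀ hr hy)
      (summable_mul_of_summable_norm (summable_norm_thetaTerm hr₀ hr hx)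
        (summable_norm_thetaTerm hr₀ hr hy))
  have huv := mul_ne_zero hu hv
  have huv' := div_ne_zero hu hv
  refine (hprod hp₀ hp hu hv).unique (hasSum_int_prod_of_add_even_of_add_odd ?_ ?_)
  · simpa only [thetaTerm_mul_of_add_even hp₀ hu hv] using
      hprod hp₀' hp' huv (mul_ne_zero hp₀ huv')
  · simpa only [thetaTerm_mul_of_add_odd hp₀ hu hv] using
      (hprod hp₀' hp' (mul_ne_zero hp₀ huv) huv').mul_left v

end ThetaAddition

section Theta

variable {p : ℝ}

lemma norm_ofReal_lt_one (hp : |p| < 1) : ‖(p : ℂ)‖ < 1 := by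
  rwa [Complex.norm_real, Real.norm_eq_abs]

lemma theta_eq_qPochhammerInf_mul (hp : |p| < 1) (z : ℂ) :
    theta p z = qPochhammerInf z (p : ℂ) * qPochhammerInf (p / z) (p : ℂ) := by
  have hp' := norm_ofReal_lt_one hp
  rw [qPochhammerInf, qPochhammerInf, ← (multipliable_one_sub_mul_pow z hp').tprod_mul
    (multipliable_one_sub_mul_pow (p / z) hp'), theta]
  simp only [pow_succ', div_mul_eq_mul_div]

lemma theta_inv (hp : |p| < 1) {z : ℂ} (hz : z ≠ 0) : theta p z⁻¹ = -z⁻¹ * theta p z := by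
  have hp' := norm_ofReal_lt_one hp
  rw [theta_eq_qPochhammerInf_mul hp, theta_eq_qPochhammerInf_mul hp,
    qPochhammerInf_eq_one_sub_mul z hp', qPochhammerInf_eq_one_sub_mul z⁻¹ hp', div_inv_eq_mul,
    mul_comm z⁻¹ (p : ℂ), ← div_eq_mul_inv, mul_comm (p : ℂ) z]
  field

lemma theta_one (p : ℝ) : theta p 1 = 0 :=
  tprod_of_exists_eq_zero ⟨0, by simp⟩

lemma theta_zero_left (z : ℂ) : theta 0 z = 1 - z := by
  rw [theta, tprod_eq_mulSingle 0 fun j hj => by simp [hj]]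
  simp

lemma exists_theta_eq_mul_thetaSeries (hp₀ : p ≠ 0) (hp : |p| < 1) :
    ∃ c : ℂ, ∀ z ≠ 0, theta p z = c * thetaSeries (p : ℂ) (-z) := by
  have hp' := norm_ofReal_lt_one hp
  refine ⟨(qPochhammerInf (p : ℂ) p)⁻¹, fun z hz => ?_⟩
  rw [← jacobi_triple_product (Complex.ofReal_ne_zero.mpr hp₀) hp' (neg_ne_zero.mpr hz),
    inv_mul_cancel_left₀ (qPochhammerInf_self_ne_zero hp'), neg_neg, div_neg, neg_neg,
    theta_eq_qPochhammerInf_mul hp]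

lemma exists_theta_mul_theta_div_eq (hp₀ : p ≠ 0) (hp : |p| < 1) :
    ∃ f g : ℂ → ℂ, ∀ x ≠ 0, ∀ y ≠ 0,
      theta p (x * y) * theta p (x / y) = f x * g y - x / y * (g x * f y) := by
  obtain ⟨c, hc⟩ := exists_theta_eq_mul_thetaSeries hp₀ hp
  refine ⟨fun x => c * thetaSeries ((p : ℂ) ^ 2) (x ^ 2),
    fun x => c * thetaSeries ((p : ℂ) ^ 2) (p * x ^ 2), fun x hx y hy => ?_⟩
  have hadd := thetaSeries_mul_thetaSeries (Complex.ofReal_ne_zero.mpr hp₀)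
    (norm_ofReal_lt_one hp) (neg_ne_zero.mpr (mul_ne_zero hx hy))
    (neg_ne_zero.mpr (div_ne_zero hx hy))
  have hmul : -(x * y) * -(x / y) = x ^ 2 := by field
  have hdiv : -(x * y) / -(x / y) = y ^ 2 := by field
  rw [hmul, hdiv] at hadd
  rw [hc _ (mul_ne_zero hx hy), hc _ (div_ne_zero hx hy)]
  linear_combination c ^ 2 * hadd

theorem theta_weierstrass_three_term (hp : |p| < 1) {x y u v : ℂ} (hx : x ≠ 0)
    (hy : y ≠ 0) (hu : u ≠ 0) (hv : v ≠ 0) :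
    v * (theta p (x * y) * theta p (x / y) * (theta p (u * v) * theta p (u / v))) +
        u * (theta p (x * u) * theta p (x / u) * (theta p (v * y) * theta p (v / y))) =
      v * (theta p (x * v) * theta p (x / v) * (theta p (u * y) * theta p (u / y))) := by
  rcases eq_or_ne p 0 with rfl | hp₀
  · simp only [theta_zero_left]
    field
  · obtain ⟨f, g, hfg⟩ := exists_theta_mul_theta_div_eq hp₀ hp
    rw [hfg x hx y hy, hfg u hu v hv, hfg x hx u hu, hfg v hv y hy, hfg x hx v hv, hfg u hu y hy]
    field

end Theta

section QPow

variable (q : ℝ)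

lemma qp_add (a b : ℂ) : qp q (a + b) = qp q a * qp q b := by
  rw [qp, add_mul, Complex.exp_add, qp, qp]

lemma qp_neg (a : ℂ) : qp q (-a) = (qp q a)⁻¹ := by
  rw [qp, neg_mul, Complex.exp_neg, qp]

lemma qp_sub (a b : ℂ) : qp q (a - b) = qp q a / qp q b := by
  rw [sub_eq_add_neg, qp_add, qp_neg, div_eq_mul_inv]

lemma qp_zero : qp q 0 = 1 := by rw [qp, zero_mul, Complex.exp_zero]

lemma qp_ne_zero (a : ℂ) : qp q a ≠ 0 := Complex.exp_ne_zero _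

lemma qp_two_mul_mul_qp (z a : ℂ) : qp q 2 * z * qp q a = z * qp q (a + 2) := by
  rw [qp_add]
  ring

end QPow

section DynamicalRepresentation

variable {p : ℝ} (q : ℝ) (k : ℕ) (lam om : ℂ)

lemma theta_qp_three_term (hp : |p| < 1) {z : ℂ} (hz : z ≠ 0) (κ : ℂ) :
    theta p (z * qp q (om - 2 * κ + 3)) * theta p (z * qp q (-om + 2 * κ + 1)) *
        (theta p (qp q (-2 * (lam + 1 - om + κ))) * theta p (qp q (-2 * (lam + 2) - 2 * κ))) +
      qp q (-2 * (lam + 2) - 2 * κ) *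
        (theta p (z * qp q (-2 * lam - 1 + om - 2 * κ)) *
          theta p (z * qp q (2 * lam + 5 - om + 2 * κ)) *
          (theta p (qp q (2 * (om - κ + 1))) * theta p (qp q (2 * κ)))) =
      theta p (z * qp q (om + 3)) * theta p (z * qp q (1 - om)) *
        (theta p (qp q (-2 * (lam - om + 2 * κ + 1))) * theta p (qp q (-2 * (lam + 2)))) := by
  have h := theta_weierstrass_three_term hp (x := z * qp q 2) (y := qp q (om - 2 * κ + 1))
    (u := qp q (-(2 * lam + 3 - om + 2 * κ))) (v := qp q (om + 1))
    (mul_ne_zero hz (qp_ne_zero q _)) (qp_ne_zero q _) (qp_ne_zero q _) (qp_ne_zero q _)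
  simp only [mul_assoc z, mul_div_assoc z, ← qp_add, ← qp_sub] at h
  have hu : qp q (-(2 * lam + 3 - om + 2 * κ)) =
      qp q (om + 1) * qp q (-2 * (lam + 2) - 2 * κ) := by
    rw [← qp_add]
    ring_nf
  rw [hu, mul_assoc (qp q (om + 1)), ← mul_add] at h
  convert mul_left_cancel₀ (qp_ne_zero q _) h using 5 <;> ring_nf

lemma Dk_mul_Ak (z : ℂ) :
    Dk p q om k lam z * Ak p q om k (lam + 1) (qp q 2 * z) =
      qp q (2 * k) *
          (theta p (z * qp q (om - 2 * k + 3)) * theta p (z * qp q (-om + 2 * k + 1)) *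
            (theta p (qp q (-2 * (lam + 1 - om + k))) *
              theta p (qp q (-2 * (lam + 2) - 2 * k)))) /
        (theta p (qp q (-2 * (lam + 1))) * theta p (z * qp q (om + 1)) *
          (theta p (qp q (-2 * (lam + 2))) * theta p (z * qp q (om + 3)))) := by
  rw [Dk, Ak, qp_two_mul_mul_qp, qp_two_mul_mul_qp,
    show om - 2 * k + 1 + 2 = om - 2 * k + 3 by ring, show om + 1 + 2 = om + 3 by ring,
    show lam + 1 + 1 = lam + 2 by ring]
  ring

lemma Bk_mul_Ck (z : ℂ) (hp : |p| < 1) (hθ : theta p (qp q 2) ≠ 0) :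
    Bk p q om (k - 1) lam z * Ck p q om k (lam + 1) (qp q 2 * z) =
      -(qp q (-2 * (lam + 2)) *
          (theta p (z * qp q (-2 * lam - 1 + om - 2 * k)) *
            theta p (z * qp q (2 * lam + 5 - om + 2 * k)) *
            (theta p (qp q (2 * (om - k + 1))) * theta p (qp q (2 * k))))) /
        (theta p (qp q (-2 * (lam + 1))) * theta p (z * qp q (om + 1)) *
          (theta p (qp q (-2 * (lam + 2))) * theta p (z * qp q (om + 3)))) := by
  rcases k with _ | n
  · simp [Ck, qp_zero, theta_one]
  · have hreflect : theta p (qp q (-2 * (lam + 2))) =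
        -qp q (-2 * (lam + 2)) * theta p (qp q (2 * (lam + 2))) := by
      rw [neg_mul, qp_neg]
      exact theta_inv hp (qp_ne_zero q _)
    have hn := qp_ne_zero q n
    have hne := qp_ne_zero q (-2 * (lam + 2))
    rw [Bk, Ck, if_neg n.succ_ne_zero, hreflect, Nat.add_sub_cancel, Nat.cast_succ,
      qp_two_mul_mul_qp, qp_two_mul_mul_qp, show om + 1 + 2 = om + 3 by ring,
      show lam + 1 + 1 = lam + 2 by ring, add_sub_cancel_right, qp_neg q n,
      show -2 * (lam + 1) + om - 2 * n - 1 = -2 * lam - 1 + om - 2 * (n + 1) by ring,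
      show 2 * (lam + 2) - om + 2 * (n + 1) - 1 + 2 = 2 * lam + 5 - om + 2 * (n + 1) by ring]
    generalize qp q (-2 * (lam + 2)) = c at hne ⊢
    field

lemma Dk_mul_Ak_sub_Bk_mul_Ck (hp : |p| < 1) {z : ℂ} (hz : z ≠ 0)
    (h₂ : theta p (qp q (-2 * (lam + 2))) ≠ 0) (h₄ : theta p (z * qp q (om + 3)) ≠ 0)
    (hθ : theta p (qp q 2) ≠ 0) :
    Dk p q om k lam z * Ak p q om k (lam + 1) (qp q 2 * z) -
        Bk p q om (k - 1) lam z * Ck p q om k (lam + 1) (qp q 2 * z) =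
      qp q (2 * k) * theta p (z * qp q (1 - om)) *
          theta p (qp q (-2 * (lam - om + 2 * k + 1))) /
        (theta p (qp q (-2 * (lam + 1))) * theta p (z * qp q (om + 1))) := by
  have hqp : qp q (-2 * (lam + 2)) = qp q (2 * k) * qp q (-2 * (lam + 2) - 2 * k) := by
    rw [← qp_add]
    ring_nf
  have hnum := theta_qp_three_term q lam om hp hz k
  rw [Dk_mul_Ak, Bk_mul_Ck q k lam om z hp hθ, ← sub_div,
    ← mul_div_mul_right (_ * _ * theta p (qp q _)) _ (mul_ne_zero h₂ h₄)]
  congr 1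
  rw [hqp] at hnum ⊢
  linear_combination qp q (2 * k) * hnum

end DynamicalRepresentation

theorem dynrep_det_action_general (p q : ℝ) (hp : |p| < 1) (_hq : 0 < q)
    (k : ℕ) (lam om z : ℂ) (hz : z ≠ 0)
    (h1 : theta p (qp q (-2 * (lam + 1))) ≠ 0)
    (h2 : theta p (qp q (-2 * (lam + 2))) ≠ 0)
    (h3 : theta p (z * qp q (om + 1)) ≠ 0)
    (h4 : theta p (qp q 2 * z * qp q (om + 1)) ≠ 0)
    (h5 : theta p (qp q 2) ≠ 0)
    (h8 : Fdet p q (lam - om + 2 * k) ≠ 0) :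
    Fdet p q lam / Fdet p q (lam - om + 2 * k) *
        (Dk p q om k lam z * Ak p q om k (lam + 1) (qp q 2 * z) -
          Bk p q om (k - 1) lam z * Ck p q om k (lam + 1) (qp q 2 * z)) =
      qp q om * theta p (z * qp q (1 - om)) / theta p (z * qp q (1 + om)) := by
  rw [qp_two_mul_mul_qp, show om + 1 + 2 = om + 3 by ring] at h4
  rw [Dk_mul_Ak_sub_Bk_mul_Ck q k lam om hp hz h2 h4 h5, add_comm 1 om]
  have hqp : qp q lam * qp q (2 * k) = qp q om * qp q (lam - om + 2 * k) := by
    rw [← qp_add, ← qp_add]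
    ring_nf
  rw [Fdet] at h8
  rw [Fdet, Fdet, div_mul_div_comm, div_eq_div_iff (mul_ne_zero h8 (mul_ne_zero h1 h3)) h3]
  linear_combination theta p (qp q (-2 * (lam + 1))) *
    theta p (qp q (-2 * (lam - om + 2 * k + 1))) * theta p (z * qp q (om + 1)) *
    theta p (z * qp q (1 - om)) * hqp

/-- The quantum determinant acts in the dynamical representation `π^ω` by the
scalar `q^ω θ(z q^{1−ω})/θ(z q^{1+ω})` (which is `1` for `ω = 0`):
`(F(λ)/F(λ−ω+2k)) [D_k(λ,z) A_k(λ+1,q²z) − B_{k−1}(λ,z) C_k(λ+1,q²z)]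
  = q^ω θ(z q^{1−ω})/θ(z q^{1+ω})`, where for `k = 0` the subtracted term is `0`
(as `C_0 = 0`). -/
theorem dynrep_det_action (p q : ℝ) (hp0 : 0 < p) (hp1 : p < 1) (hq0 : 0 < q) (hq1 : q < 1)
    (k : ℕ) (lam om z : ℂ) (hz : z ≠ 0)
    (h1 : theta p (qp q (-2 * (lam + 1))) ≠ 0)
    (h2 : theta p (qp q (-2 * (lam + 2))) ≠ 0)
    (h3 : theta p (z * qp q (om + 1)) ≠ 0)
    (h4 : theta p (qp q 2 * z * qp q (om + 1)) ≠ 0)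
    (h5 : theta p (qp q 2) ≠ 0)
    (h6 : theta p (qp q (2 * (lam + 2))) ≠ 0)
    (h7 : theta p (z * qp q (1 + om)) ≠ 0)
    (h8 : Fdet p q (lam - om + 2 * (k : ℂ)) ≠ 0) :
    Fdet p q lam / Fdet p q (lam - om + 2 * (k : ℂ)) *
        (Dk p q om k lam z * Ak p q om k (lam + 1) (qp q 2 * z) -
          Bk p q om (k - 1) lam z * Ck p q om k (lam + 1) (qp q 2 * z)) =
      qp q om * theta p (z * qp q (1 - om)) / theta p (z * qp q (1 + om)) :=
  dynrep_det_action_general p q ((abs_of_pos hp0).trans_lt hp1) hq0 k lam om z hz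
    h1 h2 h3 h4 h5 h8

end
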